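/- arXiv:2401.11525 — 2 statements merged into one kernel-verified Lean document; each statement's English description precedes it below -/
import Mathlib

section
/- Let H be a non-empty graph containing no pendant edges, and let n be an integer with n > f(H) + δ'(H). Then rwsat(n, H) ≤ δ'(H)·(n − f(H) − δ'(H)) + C(f(H)+δ'(H), 2). Moreover, this bound is witnessed by the rainbow edge-colored graph on vertex set A ∪ B ∪ C with |A| = δ'(H), |B| = f(H), |C| = n − f(H) − δ'(H), whose edges are all pairs within A ∪ B together with all pairs between A and C; this graph is weakly H-rainbow saturated. -/
open SimpleGraph

/-- The edge-colored graph `(G, c)` contains a rainbow copy of `H`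
passing through the edge `e`. -/
def IsRainbowCopyThrough {W V : Type*} (H : SimpleGraph W) (G : SimpleGraph V)
    (c : Sym2 V → ℕ) (e : Sym2 V) : Prop :=
  ∃ f : W → V, Function.Injective f ∧
    (∀ ⦃a b⦄, H.Adj a b → G.Adj (f a) (f b)) ∧
    (∀ ⦃a b a' b'⦄, H.Adj a b → H.Adj a' b' →
      c s(f a, f b) = c s(f a', f b') → s(a, b) = s(a', b')) ∧
    ∃ a b, H.Adj a b ∧ e = s(f a, f b)

/-- The edge-colored graph `(G, c)` is weakly `H`-rainbow saturated: there is an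
ordering `L` of the non-edges of `G` such that for every list `cs` of pairwise
distinct colors, adding the non-edges one at a time (the `i`-th one in color `cs i`)
always creates a new rainbow copy of `H` through the added edge. -/
def WeaklyRainbowSat {W V : Type*} [DecidableEq V] (H : SimpleGraph W)
    (G : SimpleGraph V) (c : Sym2 V → ℕ) : Prop :=
  ∃ L : List (Sym2 V), L.Nodup ∧ (∀ e, e ∈ L ↔ e ∈ Gᶜ.edgeSet) ∧
    ∀ cs : List ℕ, cs.length = L.length → cs.Nodup →
      ∀ i : Fin L.length,
        IsRainbowCopyThrough H
          (G ⊔ SimpleGraph.fromEdgeSet {e | e ∈ L.take ((i : ℕ) + 1)})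
          (((L.zip cs).take ((i : ℕ) + 1)).foldl
            (fun c' p => Function.update c' p.1 p.2) c)
          (L.get i)

/-- The weak rainbow saturation number `rwsat(n, H)`: the minimum number of edges
in a weakly `H`-rainbow saturated edge-colored graph on `n` vertices, where by
convention the value is `n.choose 2` if no such graph exists. -/
noncomputable def rwsat {W : Type*} (H : SimpleGraph W) (n : ℕ) : ℕ :=
  sInf ({m | ∃ (G : SimpleGraph (Fin n)) (c : Sym2 (Fin n) → ℕ),
    WeaklyRainbowSat H G c ∧ G.edgeSet.ncard = m} ∪ {n.choose 2})

/-- `δ'(H)`: the minimum degree among vertices of nonzero degree. -/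
noncomputable def minPosDeg {W : Type*} (H : SimpleGraph W) : ℕ :=
  sInf {d | ∃ v, (H.neighborSet v).ncard = d ∧ d ≠ 0}

/-- `A` is contained in `B` as a subgraph (there is an injective graph
homomorphism from `A` to `B`). -/
def ContainsCopy {α β : Type*} (A : SimpleGraph α) (B : SimpleGraph β) : Prop :=
  ∃ f : α → β, Function.Injective f ∧ ∀ ⦃a b⦄, A.Adj a b → B.Adj (f a) (f b)

/-- The Turán number `ex(N, ℋ)` of the family `ℋ = {H - {u, v} : uv ∈ E(H)}`:
the maximum number of edges of an `N`-vertex graph containing no member of `ℋ`. -/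
noncomputable def exFam {W : Type*} (H : SimpleGraph W) (N : ℕ) : ℕ :=
  sSup {m | ∃ G : SimpleGraph (Fin N),
    (∀ u v : W, H.Adj u v → ¬ ContainsCopy (H.induce ({u, v}ᶜ : Set W)) G) ∧
    G.edgeSet.ncard = m}

/-- `f(H)`: the smallest `n` such that for each `N ∈ {n-1, n}` one has
`ex(N, ℋ) ≤ C(N,2) - 2N - 2`. -/
noncomputable def fH {W : Type*} (H : SimpleGraph W) : ℕ :=
  sInf {n | ∀ N ∈ ({n - 1, n} : Set ℕ),
    (exFam H N : ℤ) ≤ (N.choose 2 : ℤ) - 2 * N - 2}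

/-- The coloring `c` is rainbow (injective) on the set `S` of edges. -/
def RainbowOn {V : Type*} (c : Sym2 V → ℕ) (S : Set (Sym2 V)) : Prop :=
  ∀ e₁ ∈ S, ∀ e₂ ∈ S, c e₁ = c e₂ → e₁ = e₂

/-- The witness graph for the upper bound: on `Fin n`, with
`A = [0, δ'(H))`, `B = [δ'(H), δ'(H) + f(H))` and `C` the rest, take all edges
within `A ∪ B` together with all edges between `A` and `C`. -/
noncomputable def upperWitness {W : Type*} (H : SimpleGraph W) (n : ℕ) :
    SimpleGraph (Fin n) :=
  SimpleGraph.fromRel (fun i j =>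
    ((i : ℕ) < minPosDeg H + fH H ∧ (j : ℕ) < minPosDeg H + fH H) ∨
    ((i : ℕ) < minPosDeg H ∧ minPosDeg H + fH H ≤ (j : ℕ)))

/-! Write `f = f(H)` and `d = δ'(H)`. Turán's theorem shows that `f` exists, and its definition at
`f - 1` gives `|W| ≤ f + 1`. Add first the non-edges between `B` and `C`, then those inside `C`.

For `b ∈ B` and `v ∈ C`, the color of `vb` occurs on at most one edge of the rainbow core, and
discarding one end of that edge other than `b` avoids the conflict. At least `f + d - 1` vertices of
the clique `A ∪ B` remain, which together with `v` accommodate `H`: a vertex of degree `d` goes to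
`v`, and its neighbors go to `b` and `d - 1` vertices of `A`.

For `u, v ∈ C`, all pairs from `{u, v}` to `B` are already present. Together with `uv` they use at
most `2 f + 1` colors, so by definition of `f` the complete graph on `B`, with the edges in these
colors deleted, contains `H - {x, y}` for some edge `xy` of `H`; map `x` and `y` to `u` and `v`. -/

open Finset Function

section Embeddings

variable {α β : Type*}

theorem exists_embedding_extending_pair {x y : α} (hxy : x ≠ y) {u v : β} (huv : u ≠ v)
    (g : ({x, y}ᶜ : Set α) ↪ β) (hu : ∀ a, g a ≠ u) (hv : ∀ a, g a ≠ v) :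
    ∃ F : α ↪ β, F x = u ∧ F y = v ∧ ∀ a : ({x, y}ᶜ : Set α), F a = g a := by
  classical
  let p : {a // a ∉ ({x, y}ᶜ : Set α)} → β := fun a => if a.1 = x then u else v
  have hp : Injective p := by
    rintro ⟨a, ha⟩ ⟨b, hb⟩
    simp only [Set.mem_compl_iff, Set.mem_insert_iff, Set.mem_singleton_iff, not_not] at ha hb
    grind
  have hgp (a b) : g a ≠ p b := by
    dsimp only [p]
    split_ifs
    exacts [hu a, hv a]
  exact ⟨⟨_, Injective.dite (· ∈ ({x, y}ᶜ : Set α)) g.injective hp (hgp _ _)⟩,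
    by simp [p], by simp [p, hxy.symm], fun a => dif_pos a.2⟩

theorem exists_embedding_map_eq_of_card_eq [Fintype α] {w : α} {S : Finset α} (hw : w ∉ S)
    {v : β} {N U : Finset β} (hv : v ∉ U) (hN : N ⊆ U) (hSN : #S = #N)
    (hU : Fintype.card α ≤ #U + 1) :
    ∃ F : α ↪ β, F w = v ∧ (∀ a ≠ w, F a ∈ U) ∧ S.map F = N := by
  classical
  let σ : S ≃ N := Finset.equivOfCardEq hSN
  let F₀ : α → β := fun a => if h : a ∈ S then σ ⟨a, h⟩ else v
  have hF₀w : F₀ w = v := dif_neg hw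
  have hF₀S (a : α) (ha : a ∈ S) : F₀ a = σ ⟨a, ha⟩ := dif_pos ha
  have hF₀N (a : α) (ha : a ∈ S) : F₀ a ∈ N := hF₀S a ha ▸ (σ ⟨a, ha⟩).2
  have hF₀ : Set.InjOn F₀ (insert w S : Finset α) := by
    rw [coe_insert, Set.injOn_insert (mod_cast hw)]
    constructor
    · intro a ha b hb hab
      rw [hF₀S a ha, hF₀S b hb] at hab
      simpa using σ.injective (Subtype.ext hab)
    · rintro ⟨a, ha, hav⟩
      exact hv (hN (hF₀w ▸ hav ▸ hF₀N a ha))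
  obtain ⟨t, hNt, htU, ht⟩ : ∃ t, insert v N ⊆ t ∧ t ⊆ insert v U ∧ #t = Fintype.card α := by
    refine exists_subsuperset_card_eq (insert_subset_insert v hN) ?_ ?_
    · grw [card_insert_of_notMem (mt (@hN v) hv), ← hSN, ← card_insert_of_notMem hw, card_le_univ]
    · rwa [card_insert_of_notMem hv]
  have hmaps : (insert w S).image F₀ ⊆ t := by
    refine Subset.trans ?_ hNt
    rw [image_insert, hF₀w]
    exact insert_subset_insert v (image_subset_iff.2 hF₀N)
  obtain ⟨g, hg⟩ := exists_equiv_extend_of_card_eq ht.symm hmaps hF₀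
  let F : α ↪ β := g.toEmbedding.trans (Embedding.subtype _)
  have hFw : F w = v := (hg w (mem_insert_self w S)).trans hF₀w
  have hFS (a : α) (ha : a ∈ S) : F a = F₀ a := hg a (mem_insert_of_mem ha)
  refine ⟨F, hFw, fun a ha => ?_, eq_of_subset_of_card_le ?_ ?_⟩
  · exact mem_of_mem_insert_of_ne (htU (g a).2) (hFw ▸ F.injective.ne ha)
  · intro b hb
    obtain ⟨a, ha, rfl⟩ := mem_map.1 hb
    exact hFS a ha ▸ hF₀N a ha
  · rw [card_map, hSN]

end Embeddings

section Extremal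

variable {V W : Type*}

theorem containsCopy_iff_isContained {A : SimpleGraph V} {B : SimpleGraph W} :
    ContainsCopy A B ↔ A ⊑ B :=
  ⟨fun ⟨f, hf, hAB⟩ => ⟨⟨f, @hAB⟩, hf⟩, fun ⟨f⟩ => ⟨f, f.injective, fun _ _ h => f.toHom.map_adj h⟩⟩

theorem cliqueFree_of_free [Finite V] {A : SimpleGraph V} {G : SimpleGraph W} (h : A.Free G) :
    G.CliqueFree (Nat.card V) := by
  have := Fintype.ofFinite V
  rw [Nat.card_eq_fintype_card, cliqueFree_iff_top_free]
  exact fun hG => h (IsContained.trans (.of_le le_top) hG)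

theorem mul_ncard_edgeSet_le_of_cliqueFree [Finite V] {G : SimpleGraph V} {r : ℕ}
    (h : G.CliqueFree (r + 2)) : 2 * (r + 1) * G.edgeSet.ncard ≤ r * Nat.card V ^ 2 := by
  classical
  have := Fintype.ofFinite V
  rw [← coe_edgeFinset, Set.ncard_coe_finset, Nat.card_eq_fintype_card]
  calc 2 * (r + 1) * #G.edgeFinset
    _ ≤ 2 * (r + 1) * #(turanGraph (Fintype.card V) (r + 1)).edgeFinset := by
      rw [card_edgeFinset_turanGraph]
      gcongr
      exact h.card_edgeFinset_le
    _ ≤ r * Fintype.card V ^ 2 := mul_card_edgeFinset_turanGraph_le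

-- With Turán's bound, the inequality amounts to `N * (N - 5 * (r + 1)) ≥ 4 * (r + 1)` for `N`
-- vertices, whence the threshold on `N`.
theorem ncard_edgeSet_add_le_of_cliqueFree [Finite V] {G : SimpleGraph V} {r : ℕ}
    (h : G.CliqueFree (r + 2)) (hV : 5 * r + 9 ≤ Nat.card V) :
    G.edgeSet.ncard + 2 * Nat.card V + 2 ≤ (Nat.card V).choose 2 := by
  have hturan := mul_ncard_edgeSet_le_of_cliqueFree h
  generalize Nat.card V = N at *
  generalize G.edgeSet.ncard = m at *
  have hturan' : (2 * (r + 1) * m : ℚ) ≤ r * N ^ 2 := mod_cast hturan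
  have hV' : (5 * r + 9 : ℚ) ≤ N := mod_cast hV
  have hr : (0 : ℚ) ≤ r := r.cast_nonneg
  suffices h : ((m + 2 * N + 2 : ℕ) : ℚ) ≤ N.choose 2 from mod_cast h
  rw [Nat.cast_choose_two]
  push_cast
  have hscaled : (r + 1 : ℚ) * (2 * (m + 2 * N + 2)) ≤ (r + 1) * (N * (N - 1)) := by
    have hsq : (N * (5 * r + 9) : ℚ) ≤ N * N := by gcongr
    linarith [hr]
  linarith [le_of_mul_le_mul_left hscaled (by positivity)]

theorem ncard_edgeSet_add_ncard_edgeSet_compl [Finite V] (G : SimpleGraph V) :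
    G.edgeSet.ncard + Gᶜ.edgeSet.ncard = (Nat.card V).choose 2 := by
  classical
  have := Fintype.ofFinite V
  rw [← Set.ncard_union_eq (disjoint_edgeSet.2 disjoint_compl_right), ← edgeSet_sup,
    sup_compl_eq_top, ← coe_edgeFinset, Set.ncard_coe_finset,
    card_edgeFinset_top_eq_card_choose_two, Nat.card_eq_fintype_card]

variable {H : SimpleGraph W} {N : ℕ}

theorem exists_containsCopy_of_exFam_lt {K : SimpleGraph (Fin N)}
    (h : exFam H N < K.edgeSet.ncard) :
    ∃ x y, H.Adj x y ∧ ContainsCopy (H.induce ({x, y}ᶜ : Set W)) K := by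
  by_contra! hK
  refine h.not_ge (le_csSup ⟨(Set.univ : Set (Sym2 (Fin N))).ncard, ?_⟩ ⟨K, hK, rfl⟩)
  rintro _ ⟨G, -, rfl⟩
  exact Set.ncard_le_ncard (Set.subset_univ _)

theorem exists_containsCopy_of_ncard_edgeSet_compl_le
    (hN : exFam H N + 2 * N + 2 ≤ N.choose 2) {K : SimpleGraph (Fin N)}
    (hK : Kᶜ.edgeSet.ncard ≤ 2 * N + 1) :
    ∃ x y, H.Adj x y ∧ ContainsCopy (H.induce ({x, y}ᶜ : Set W)) K := by
  apply exists_containsCopy_of_exFam_lt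
  have := ncard_edgeSet_add_ncard_edgeSet_compl K
  rw [Nat.card_fin] at this
  omega

variable [Finite W]

theorem exFam_add_le_of_large (hH : H.edgeSet.Nonempty) (hN : 5 * Nat.card W + 9 ≤ N) :
    exFam H N + 2 * N + 2 ≤ N.choose 2 := by
  obtain ⟨⟨x, y⟩, hxy⟩ := hH
  have hbound {G : SimpleGraph (Fin N)} (hG : G.CliqueFree (Nat.card W + 2)) :
      G.edgeSet.ncard + 2 * N + 2 ≤ N.choose 2 := by
    simpa only [Nat.card_fin] using ncard_edgeSet_add_le_of_cliqueFree hG (by rwa [Nat.card_fin])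
  have hexFam : exFam H N ≤ N.choose 2 - (2 * N + 2) := by
    apply csSup_le'
    rintro _ ⟨G, hG, rfl⟩
    have hfree := cliqueFree_of_free (mt containsCopy_iff_isContained.2 (hG x y hxy))
    have := hbound (hfree.mono ((Finite.card_subtype_le _).trans (Nat.le_add_right _ 2)))
    omega
  have := hbound (G := ⊥) (cliqueFree_bot (by omega))
  omega

theorem exFam_add_le_of_mem_pred_fH (hH : H.edgeSet.Nonempty)
    (hN : N ∈ ({fH H - 1, fH H} : Set ℕ)) : exFam H N + 2 * N + 2 ≤ N.choose 2 := by
  have hne : {n | ∀ N ∈ ({n - 1, n} : Set ℕ),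
      (exFam H N : ℤ) ≤ (N.choose 2 : ℤ) - 2 * N - 2}.Nonempty := by
    refine ⟨5 * Nat.card W + 10, fun M hM => ?_⟩
    have := exFam_add_le_of_large (N := M) hH (by rcases hM with rfl | rfl <;> omega)
    omega
  have := Nat.sInf_mem hne N hN
  omega

-- The value `N = f(H) - 1` in the definition of `f(H)` enters here: a complete graph on that many
-- vertices contains some `H - {x, y}`.
theorem card_le_fH_add_one (hH : H.edgeSet.Nonempty) : Nat.card W ≤ fH H + 1 := by
  have hpos : fH H ≠ 0 := by
    intro h
    have := exFam_add_le_of_mem_pred_fH hH (.inr rfl)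
    simp [h] at this
  obtain ⟨x, y, -, g, hg, -⟩ := exists_containsCopy_of_ncard_edgeSet_compl_le (K := ⊤)
    (exFam_add_le_of_mem_pred_fH hH (.inl rfl)) (by simp)
  have hcompl := Nat.card_le_card_of_injective g hg
  have hpair := Set.ncard_insert_le x {y}
  rw [Nat.card_coe_set_eq, Set.ncard_compl, Nat.card_fin] at hcompl
  rw [Set.ncard_singleton] at hpair
  omega

theorem exists_ncard_neighborSet_eq_minPosDeg (hH : H.edgeSet.Nonempty) :
    ∃ w, (H.neighborSet w).ncard = minPosDeg H ∧ minPosDeg H ≠ 0 := by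
  obtain ⟨⟨x, y⟩, hxy⟩ := hH
  have hxy : y ∈ H.neighborSet x := hxy
  exact Nat.sInf_mem (s := {d | ∃ v, (H.neighborSet v).ncard = d ∧ d ≠ 0})
    ⟨_, x, rfl, Set.ncard_ne_zero_of_mem hxy⟩

end Extremal

section RainbowCopies

variable {V W : Type*} {H : SimpleGraph W} {G : SimpleGraph V} {c : Sym2 V → ℕ} {E : Set (Sym2 V)}

theorem isRainbowCopyThrough_of_injOn (hEG : E ⊆ G.edgeSet) (hc : E.InjOn c) (F : W ↪ V)
    (hF : ∀ ⦃x y⦄, H.Adj x y → s(F x, F y) ∈ E) {x y : W} (hxy : H.Adj x y) :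
    IsRainbowCopyThrough H G c s(F x, F y) :=
  ⟨F, F.injective, fun _ _ h => hEG (hF h),
    fun _ _ _ _ h h' hcol => Sym2.map.injective F.injective (hc (hF h) (hF h') hcol),
    x, y, hxy, rfl⟩

theorem injOn_union_sep_notMem_image {α β : Type*} {f : α → β} {P Q : Set α} (hP : P.InjOn f)
    (hQ : Q.InjOn f) : (P ∪ {a ∈ Q | f a ∉ f '' P}).InjOn f := by
  rintro a (ha | ⟨ha, ha'⟩) b (hb | ⟨hb, hb'⟩) hab
  · exact hP ha hb hab
  · exact absurd ⟨a, ha, hab⟩ hb'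
  · exact absurd ⟨b, hb, hab.symm⟩ ha'
  · exact hQ ha hb hab

theorem isRainbowCopyThrough_of_clique_of_star [Finite W] (hEG : E ⊆ G.edgeSet) (hc : E.InjOn c)
    {w : W} {v : V} {N U : Finset V} (hv : v ∉ U) (hNU : N ⊆ U) (hN : (H.neighborSet w).ncard = #N)
    (hU : Nat.card W ≤ #U + 1) (hclique : ∀ a ∈ U, ∀ b ∈ U, a ≠ b → s(a, b) ∈ E)
    (hstar : ∀ a ∈ N, s(v, a) ∈ E) {b : V} (hb : b ∈ N) :
    IsRainbowCopyThrough H G c s(v, b) := by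
  classical
  have := Fintype.ofFinite W
  rw [← coe_neighborFinset, Set.ncard_coe_finset] at hN
  rw [Nat.card_eq_fintype_card] at hU
  obtain ⟨F, rfl, hFU, rfl⟩ :=
    exists_embedding_map_eq_of_card_eq (H.notMem_neighborFinset_self w) hv hNU hN hU
  have hFstar (x : W) (hx : H.Adj w x) : s(F w, F x) ∈ E :=
    hstar _ (mem_map_of_mem F ((H.mem_neighborFinset w x).2 hx))
  obtain ⟨z, hz, rfl⟩ := mem_map.1 hb
  rw [mem_neighborFinset] at hz
  refine isRainbowCopyThrough_of_injOn hEG hc F (fun x y hxy => ?_) hz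
  by_cases hx : x = w
  · exact hx ▸ hFstar y (hx ▸ hxy)
  by_cases hy : y = w
  · rw [Sym2.eq_swap]
    exact hy ▸ hFstar x (hy ▸ hxy.symm)
  · exact hclique _ (hFU x hx) _ (hFU y hy) (F.injective.ne hxy.ne)

theorem exists_embedding_avoiding_colors [Finite W] {κ : Type*} {c : Sym2 V → κ}
    (hH : H.edgeSet.Nonempty) {B : Finset V} (hB : #B = fH H) (hBG : G.IsClique B)
    (hc : G.edgeSet.InjOn c) {S : Finset κ} (hS : #S ≤ 2 * fH H + 1) :
    ∃ x y, H.Adj x y ∧ ∃ g : ({x, y}ᶜ : Set W) ↪ V, (∀ a, g a ∈ B) ∧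
      ∀ ⦃a b : ({x, y}ᶜ : Set W)⦄, H.Adj a b → G.Adj (g a) (g b) ∧ c s(g a, g b) ∉ S := by
  let β : Fin (fH H) ↪ V := (B.equivFinOfCardEq hB).symm.toEmbedding.trans (Embedding.subtype _)
  have hβB (i : Fin (fH H)) : β i ∈ B := ((B.equivFinOfCardEq hB).symm i).2
  have hβG {i j : Fin (fH H)} (hij : i ≠ j) : G.Adj (β i) (β j) :=
    hBG (hβB i) (hβB j) (β.injective.ne hij)
  let K : SimpleGraph (Fin (fH H)) := fromEdgeSet {e | c (e.map β) ∉ S}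
  have hcompl (i j : Fin (fH H)) (hij : s(i, j) ∈ Kᶜ.edgeSet) : i ≠ j ∧ c s(β i, β j) ∈ S := by
    obtain ⟨hne, hcol⟩ : i ≠ j ∧ (c s(β i, β j) ∉ S → i = j) := by simpa [K] using hij
    exact ⟨hne, by_contra fun h => hne (hcol h)⟩
  have hK : Kᶜ.edgeSet.ncard ≤ 2 * fH H + 1 := by
    rw [← Set.ncard_coe_finset] at hS
    refine (Set.ncard_le_ncard_of_injOn (fun e => c (e.map β)) ?_ ?_ S.finite_toSet).trans hS
    · rintro ⟨i, j⟩ hij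
      exact (hcompl i j hij).2
    · rintro ⟨i, j⟩ hij ⟨k, l⟩ hkl h
      exact Sym2.map.injective β.injective
        (hc (hβG (hcompl i j hij).1) (hβG (hcompl k l hkl).1) h)
  obtain ⟨x, y, hxy, g, hg, hgK⟩ := exists_containsCopy_of_ncard_edgeSet_compl_le
    (exFam_add_le_of_mem_pred_fH hH (.inr rfl)) hK
  refine ⟨x, y, hxy, ⟨β ∘ g, β.injective.comp hg⟩, fun a => hβB (g a), fun a b hab => ?_⟩
  obtain ⟨hcol, hne⟩ := (fromEdgeSet_adj _).1 (hgK (a := a) (b := b) hab)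
  exact ⟨hβG hne, hcol⟩

theorem isRainbowCopyThrough_of_joined_pair [Finite W] (hH : H.edgeSet.Nonempty) {R : SimpleGraph V}
    (hRG : R ≤ G) (hcR : R.edgeSet.InjOn c) (hEG : E ⊆ G.edgeSet) (hcE : E.InjOn c)
    {B : Finset V} (hB : #B = fH H) (hBR : R.IsClique B) {u v : V} (hu : u ∉ B) (hv : v ∉ B)
    (huB : ∀ b ∈ B, s(u, b) ∈ E) (hvB : ∀ b ∈ B, s(v, b) ∈ E) (huv : s(u, v) ∈ E) :
    IsRainbowCopyThrough H G c s(u, v) := by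
  classical
  let P : Finset (Sym2 V) := insert s(u, v) (B.image (s(u, ·)) ∪ B.image (s(v, ·)))
  have hPE : (P : Set (Sym2 V)) ⊆ E := by
    simp only [P, coe_insert, coe_union, coe_image, Set.insert_subset_iff, Set.union_subset_iff,
      Set.image_subset_iff]
    exact ⟨huv, huB, hvB⟩
  have hP : #(P.image c) ≤ 2 * fH H + 1 := by
    grw [card_image_le, card_insert_le, card_union_le, card_image_le, card_image_le, hB, two_mul]
  obtain ⟨x, y, hxy, g, hgB, hg⟩ := exists_embedding_avoiding_colors hH hB hBR hcR hP
  have hgu (a) : g a ≠ u := fun h => hu (h ▸ hgB a)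
  have hgv (a) : g a ≠ v := fun h => hv (h ▸ hgB a)
  obtain ⟨F, rfl, rfl, hFg⟩ :=
    exists_embedding_extending_pair hxy.ne (G.ne_of_adj (hEG huv)) g hgu hgv
  have hFB (a : W) (hax : a ≠ x) (hay : a ≠ y) : F a ∈ B :=
    hFg ⟨a, by simp [hax, hay]⟩ ▸ hgB ⟨a, by simp [hax, hay]⟩
  have hxP (a : W) (ha : a ≠ x) : s(F x, F a) ∈ P := by
    by_cases hay : a = y
    · simp [P, hay]
    · exact mem_insert_of_mem (mem_union_left _ (mem_image_of_mem _ (hFB a ha hay)))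
  have hyP (a : W) (ha : a ≠ y) : s(F y, F a) ∈ P := by
    by_cases hax : a = x
    · simp [P, hax, Sym2.eq_swap (a := F y)]
    · exact mem_insert_of_mem (mem_union_right _ (mem_image_of_mem _ (hFB a hax ha)))
  refine isRainbowCopyThrough_of_injOn (E := P ∪ {e ∈ R.edgeSet | c e ∉ c '' P})
    (Set.union_subset (hPE.trans hEG) fun e he => edgeSet_mono hRG he.1)
    (injOn_union_sep_notMem_image (hcE.mono hPE) hcR) F (fun a b hab => ?_) hxy
  by_cases ha : a = x ∨ a = y
  · rcases ha with rfl | rfl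
    exacts [.inl (hxP b hab.ne'), .inl (hyP b hab.ne')]
  by_cases hb : b = x ∨ b = y
  · rw [Sym2.eq_swap]
    rcases hb with rfl | rfl
    exacts [.inl (hxP a hab.ne), .inl (hyP a hab.ne)]
  · rw [← coe_image]
    have := @hg ⟨a, ha⟩ ⟨b, hb⟩ hab
    rw [← hFg, ← hFg] at this
    exact .inr this

end RainbowCopies

section Recoloring

variable {α β : Type*}

theorem exists_nodup_list_pairwise_le {γ : Type*} [LinearOrder γ] (r : α → γ) (s : Finset α) :
    ∃ L : List α, L.Nodup ∧ (∀ a, a ∈ L ↔ a ∈ s) ∧ L.Pairwise (r · ≤ r ·) := by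
  refine ⟨s.toList.insertionSort (r · ≤ r ·), ?_, fun a => ?_, ?_⟩
  · exact (List.perm_insertionSort _ _).nodup_iff.2 s.nodup_toList
  · rw [List.mem_insertionSort, mem_toList]
  · have : Std.Total (fun a b : α => r a ≤ r b) := ⟨fun a b => le_total (r a) (r b)⟩
    have : IsTrans α (r · ≤ r ·) := ⟨fun _ _ _ => le_trans⟩
    exact List.pairwise_insertionSort _ _

variable [DecidableEq α]

theorem foldl_update_apply_of_notMem {l : List (α × β)} {f : α → β} {a : α}
    (ha : a ∉ l.map Prod.fst) : l.foldl (fun g p => update g p.1 p.2) f a = f a := by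
  induction l generalizing f with
  | nil => rfl
  | cons p l ih =>
    rw [List.map_cons, List.mem_cons, not_or] at ha
    rw [List.foldl_cons, ih ha.2, update_of_ne ha.1]

theorem foldl_update_apply_of_mem {l : List (α × β)} (hl : (l.map Prod.fst).Nodup) {f : α → β}
    {p : α × β} (hp : p ∈ l) : l.foldl (fun g p => update g p.1 p.2) f p.1 = p.2 := by
  induction l generalizing f with
  | nil => cases hp
  | cons q l ih =>
    rw [List.map_cons, List.nodup_cons] at hl
    rw [List.foldl_cons]
    rcases List.mem_cons.1 hp with rfl | hp
    · rw [foldl_update_apply_of_notMem hl.1, update_self]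
    · exact ih hl.2 hp

theorem injOn_foldl_update {l : List (α × β)} (hfst : (l.map Prod.fst).Nodup)
    (hsnd : (l.map Prod.snd).Nodup) (f : α → β) :
    Set.InjOn (l.foldl (fun g p => update g p.1 p.2) f) {a | a ∈ l.map Prod.fst} := by
  intro a ha b hb hab
  obtain ⟨p, hp, rfl⟩ := List.mem_map.1 ha
  obtain ⟨q, hq, rfl⟩ := List.mem_map.1 hb
  rw [foldl_update_apply_of_mem hfst hp, foldl_update_apply_of_mem hfst hq] at hab
  rw [List.inj_on_of_nodup_map hsnd hp hq hab]

variable {V W : Type*} [Finite V] [DecidableEq V] {H : SimpleGraph W} {G : SimpleGraph V}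
  {c : Sym2 V → ℕ}

theorem weaklyRainbowSat_of_rank {γ : Type*} [LinearOrder γ] (r : Sym2 V → γ)
    (hc : G.edgeSet.InjOn c)
    (h : ∀ (T : Set (Sym2 V)) (c' : Sym2 V → ℕ), T ⊆ Gᶜ.edgeSet → G.edgeSet.InjOn c' →
      T.InjOn c' → ∀ e ∈ T, (∀ e' ∈ Gᶜ.edgeSet, r e' < r e → e' ∈ T) →
        IsRainbowCopyThrough H (G ⊔ fromEdgeSet T) c' e) :
    WeaklyRainbowSat H G c := by
  obtain ⟨L, hL, hLG, hLr⟩ :=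
    exists_nodup_list_pairwise_le r (Set.toFinite Gᶜ.edgeSet).toFinset
  simp only [Set.Finite.mem_toFinset] at hLG
  refine ⟨L, hL, hLG, fun cs hcs hcsL i => ?_⟩
  have hfst : ((L.zip cs).take (i + 1)).map Prod.fst = L.take (i + 1) := by
    rw [List.map_take, List.map_fst_zip hcs.ge]
  have hsnd : ((L.zip cs).take (i + 1)).map Prod.snd = cs.take (i + 1) := by
    rw [List.map_take, List.map_snd_zip hcs.le]
  have hTG : {e | e ∈ L.take (i + 1)} ⊆ Gᶜ.edgeSet := fun e he =>
    (hLG e).1 (List.mem_of_mem_take he)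
  refine h _ _ hTG ?_ ?_ _ ?_ fun e' he' hlt => ?_
  · refine hc.congr fun e he => (foldl_update_apply_of_notMem fun heT => ?_).symm
    rw [hfst] at heT
    exact (disjoint_edgeSet.2 disjoint_compl_right).notMem_of_mem_left he (hTG heT)
  · rw [← hfst]
    exact injOn_foldl_update (hfst ▸ hL.take) (hsnd ▸ hcsL.take) c
  · exact List.mem_take_iff_getElem.2 ⟨i, by simp, rfl⟩
  · obtain ⟨j, hj, rfl⟩ := List.getElem_of_mem ((hLG e').2 he')
    have hji : j < i + 1 := by
      by_contra! hij
      exact hlt.not_ge (List.pairwise_iff_getElem.1 hLr i j i.2 hj (by omega))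
    exact List.mem_take_iff_getElem.2 ⟨j, by omega, rfl⟩

end Recoloring

section CoreGraph

variable {V W : Type*} {A B : Finset V}

/-- The graph whose edges are all pairs within `A ∪ B` and all pairs meeting `A`. For disjoint `A`
and `B` this is the witness graph on `A ∪ B ∪ C`, the part `C` consisting of the remaining
vertices. -/
def coreGraph (A B : Finset V) : SimpleGraph V where
  Adj i j := i ≠ j ∧ (i ∈ A ∨ j ∈ A ∨ i ∈ B ∧ j ∈ B)
  symm := ⟨fun _ _ h => by tauto⟩
  loopless := ⟨fun _ h => h.1 rfl⟩

theorem coreGraph_adj {i j : V} :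
    (coreGraph A B).Adj i j ↔ i ≠ j ∧ (i ∈ A ∨ j ∈ A ∨ i ∈ B ∧ j ∈ B) :=
  Iff.rfl

theorem isClique_coreGraph [DecidableEq V] : (coreGraph A B).IsClique (A ∪ B : Finset V) := by
  intro i hi j hj hij
  simp only [mem_coe, mem_union] at hi hj
  exact coreGraph_adj.2 ⟨hij, by tauto⟩

theorem exists_mem_cover_forall_mem_of_color_eq {κ : Type*} {R : SimpleGraph V} {c : Sym2 V → κ}
    (hc : R.edgeSet.InjOn c) {S : Set V} (hS : S.Nonempty) (hcover : R.IsVertexCover S) (k : κ) :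
    ∃ x ∈ S, ∀ e ∈ R.edgeSet, c e = k → x ∈ e := by
  by_cases hk : ∃ e ∈ R.edgeSet, c e = k
  · obtain ⟨⟨i, j⟩, hij, rfl⟩ := hk
    have hmem {x : V} (hx : x ∈ s(i, j)) (e) (he : e ∈ R.edgeSet) (hce : c e = c s(i, j)) : x ∈ e :=
      hc he hij hce ▸ hx
    rcases hcover hij with hi | hj
    exacts [⟨i, hi, hmem (Sym2.mem_mk_left i j)⟩, ⟨j, hj, hmem (Sym2.mem_mk_right i j)⟩]
  · obtain ⟨x, hx⟩ := hS
    exact ⟨x, hx, fun e he hce => (hk ⟨e, he, hce⟩).elim⟩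

theorem isVertexCover_coreGraph_erase [DecidableEq V] {b : V} (hb : b ∉ A) :
    (coreGraph A B).IsVertexCover ((A ∪ B).erase b : Finset V) := by
  intro i j hij
  have := coreGraph_adj.1 hij
  simp only [mem_coe, mem_erase, mem_union]
  grind

theorem exists_mem_erase_forall_mem_of_color_eq [DecidableEq V] {κ : Type*} {c : Sym2 V → κ}
    (hc : (coreGraph A B).edgeSet.InjOn c) (hA : A.Nonempty) {b : V} (hb : b ∉ A) (k : κ) :
    ∃ x ∈ (A ∪ B).erase b, ∀ e ∈ (coreGraph A B).edgeSet, c e = k → x ∈ e := by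
  refine exists_mem_cover_forall_mem_of_color_eq hc ?_ (isVertexCover_coreGraph_erase hb) k
  obtain ⟨a, ha⟩ := hA
  exact ⟨a, mem_erase.2 ⟨ne_of_mem_of_not_mem ha hb, mem_union_left B ha⟩⟩

theorem edgeSet_coreGraph [Fintype V] [DecidableEq V] (A B : Finset V) :
    (coreGraph A B).edgeSet =
      ((A ∪ B).offDiag.image (uncurry Sym2.mk) ∪ (A ×ˢ (A ∪ B)ᶜ).image (uncurry Sym2.mk) :
        Finset (Sym2 V)) := by
  ext ⟨i, j⟩
  simp only [mem_edgeSet, coreGraph_adj, coe_union, coe_image, Set.mem_union, Set.mem_image,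
    mem_coe, mem_offDiag, mem_product, mem_compl, mem_union, Prod.exists, uncurry_apply_pair,
    Sym2.eq_iff]
  grind

theorem ncard_edgeSet_coreGraph [Finite V] (hAB : Disjoint A B) :
    (coreGraph A B).edgeSet.ncard = #A * (Nat.card V - (#A + #B)) + (#A + #B).choose 2 := by
  classical
  have := Fintype.ofFinite V
  have hdisj : Disjoint ((A ∪ B).offDiag.image (uncurry Sym2.mk))
      ((A ×ˢ (A ∪ B)ᶜ).image (uncurry Sym2.mk)) := by
    simp only [Finset.disjoint_left, mem_image, mem_offDiag, mem_product, mem_compl, Prod.exists,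
      uncurry_apply_pair]
    rintro _ ⟨i, j, ⟨hi, hj, -⟩, rfl⟩ ⟨k, l, ⟨-, hl⟩, h⟩
    rcases Sym2.eq_iff.1 h with ⟨-, rfl⟩ | ⟨-, rfl⟩
    exacts [hl hj, hl hi]
  have hinj : Set.InjOn (uncurry Sym2.mk) ((A ×ˢ (A ∪ B)ᶜ : Finset (V × V)) : Set (V × V)) := by
    simp only [Set.InjOn, mem_coe, mem_product, mem_compl, Prod.forall, uncurry_apply_pair]
    rintro i j ⟨hi, -⟩ k l ⟨-, hl⟩ h
    rcases Sym2.eq_iff.1 h with ⟨rfl, rfl⟩ | ⟨rfl, -⟩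
    exacts [rfl, (hl (mem_union_left B hi)).elim]
  rw [edgeSet_coreGraph, Set.ncard_coe_finset, card_union_of_disjoint hdisj,
    Sym2.card_image_offDiag, card_image_of_injOn hinj, card_product, card_compl,
    card_union_of_disjoint hAB, Nat.card_eq_fintype_card, add_comm]

theorem exists_upperWitness_eq_coreGraph (H : SimpleGraph W) {n : ℕ} (hn : fH H + minPosDeg H ≤ n) :
    ∃ A B : Finset (Fin n), #A = minPosDeg H ∧ #B = fH H ∧ Disjoint A B ∧
      upperWitness H n = coreGraph A B := by
  have hA : ∀ i ∈ range (minPosDeg H), i < n := by grind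
  have hB : ∀ i ∈ Ico (minPosDeg H) (minPosDeg H + fH H), i < n := by grind
  refine ⟨attachFin _ hA, attachFin _ hB, by simp, by simp, ?_, ?_⟩
  · simp only [Finset.disjoint_left, mem_attachFin, mem_range, mem_Ico]
    omega
  · ext i j
    simp only [upperWitness, fromRel_adj, coreGraph_adj, mem_attachFin, mem_range, mem_Ico]
    omega

variable [Finite W] {H : SimpleGraph W} {G : SimpleGraph V} {c : Sym2 V → ℕ}

theorem isRainbowCopyThrough_of_coreGraph_le [DecidableEq V] (hH : H.edgeSet.Nonempty)
    (hA : #A = minPosDeg H) (hB : #B = fH H) (hAB : Disjoint A B) (hG : coreGraph A B ≤ G)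
    (hc : (coreGraph A B).edgeSet.InjOn c) {v b : V} (hv : v ∉ A ∪ B) (hb : b ∈ B)
    (hvb : G.Adj v b) : IsRainbowCopyThrough H G c s(v, b) := by
  obtain ⟨w, hw, hpos⟩ := exists_ncard_neighborSet_eq_minPosDeg hH
  have hbA : b ∉ A := disjoint_right.1 hAB hb
  obtain ⟨x, hx, hxc⟩ := exists_mem_erase_forall_mem_of_color_eq hc
    (card_ne_zero.1 (hA ▸ hpos)) hbA (c s(v, b))
  rw [mem_erase] at hx
  obtain ⟨A', hA'A, hA'⟩ := exists_subset_card_eq (pred_card_le_card_erase (s := A) (a := x))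
  have hA'x (a : V) (ha : a ∈ A') : a ≠ x ∧ a ∈ A := mem_erase.1 (hA'A ha)
  have hvx : v ≠ x := ne_of_mem_of_not_mem hx.2 hv |>.symm
  let E := {s(v, b)} ∪ {e ∈ (coreGraph A B).edgeSet | c e ∉ c '' {s(v, b)}}
  have hE {i j : V} (hij : (coreGraph A B).Adj i j) (hi : i ≠ x) (hj : j ≠ x) : s(i, j) ∈ E := by
    refine .inr ⟨hij, ?_⟩
    rintro ⟨_, rfl, hcol⟩
    rcases Sym2.mem_iff.1 (hxc _ hij hcol.symm) with rfl | rfl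
    exacts [hi rfl, hj rfl]
  refine isRainbowCopyThrough_of_clique_of_star (E := E) (w := w) (N := insert b A')
    (U := (A ∪ B).erase x)
    (Set.union_subset (by simpa using hvb) fun e he => edgeSet_mono hG he.1)
    (injOn_union_sep_notMem_image (Set.injOn_singleton _ _) hc) (mt mem_of_mem_erase hv)
    ?_ ?_ ?_ ?_ ?_ (mem_insert_self b A')
  · refine insert_subset (mem_erase.2 ⟨hx.1.symm, mem_union_right A hb⟩) ?_
    exact hA'A.trans (erase_subset_erase x subset_union_left)
  · rw [hw, card_insert_of_notMem fun h => hbA (hA'x b h).2, hA', hA]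
    omega
  · rw [card_erase_add_one hx.2, card_union_of_disjoint hAB, hA, hB]
    exact (card_le_fH_add_one hH).trans (by omega)
  · intro i hi j hj hij
    rw [mem_erase] at hi hj
    exact hE (isClique_coreGraph hi.2 hj.2 hij) hi.1 hj.1
  · intro a ha
    rcases mem_insert.1 ha with rfl | ha
    · exact .inl rfl
    · obtain ⟨hax, haA⟩ := hA'x a ha
      refine hE (coreGraph_adj.2 ⟨?_, .inr (.inl haA)⟩) hvx hax
      exact (ne_of_mem_of_not_mem (mem_union_left B haA) hv).symm

theorem weaklyRainbowSat_coreGraph [Finite V] [DecidableEq V] (hH : H.edgeSet.Nonempty)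
    (hA : #A = minPosDeg H) (hB : #B = fH H) (hAB : Disjoint A B)
    (hc : (coreGraph A B).edgeSet.InjOn c) : WeaklyRainbowSat H (coreGraph A B) c := by
  -- Since `False < True`, the non-edges meeting `B` come first.
  refine weaklyRainbowSat_of_rank (fun e => ∀ b ∈ B, b ∉ e) hc fun T c' hT hc' hcT e he hlt => ?_
  have hTG : T ⊆ (coreGraph A B ⊔ fromEdgeSet T).edgeSet := fun e he =>
    (edgeSet_mono le_sup_right) (by
      rw [edgeSet_fromEdgeSet]
      exact ⟨he, not_isDiag_of_mem_edgeSet _ (hT he)⟩)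
  induction e with | h u v =>
  obtain ⟨hne, hcore⟩ := (compl_adj _ _ _).1 (hT he)
  rw [coreGraph_adj] at hcore
  by_cases hu : u ∈ B
  · rw [Sym2.eq_swap]
    exact isRainbowCopyThrough_of_coreGraph_le hH hA hB hAB le_sup_left hc'
      (by rw [mem_union]; tauto) hu (hTG he).symm
  by_cases hv : v ∈ B
  · exact isRainbowCopyThrough_of_coreGraph_le hH hA hB hAB le_sup_left hc'
      (by rw [mem_union]; tauto) hv (hTG he)
  have hjoin {w : V} (hwA : w ∉ A) (hwB : w ∉ B) (b : V) (hb : b ∈ B) : s(w, b) ∈ T := by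
    refine hlt _ ?_ ?_
    · rw [mem_edgeSet, compl_adj, coreGraph_adj]
      have := disjoint_right.1 hAB hb
      grind
    · have hr : ∀ b' ∈ B, b' ∉ s(u, v) := by
        intro b' hb' h
        rcases Sym2.mem_iff.1 h with rfl | rfl
        exacts [hu hb', hv hb']
      exact lt_of_le_not_ge (fun _ => hr) fun h => h hr b hb (Sym2.mem_mk_right w b)
  exact isRainbowCopyThrough_of_joined_pair hH le_sup_left hc' hTG hcT hB
    (isClique_coreGraph.subset (coe_subset.2 subset_union_right)) hu hv
    (hjoin (by tauto) hu) (hjoin (by tauto) hv) he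

end CoreGraph

theorem rwsat_le_ncard_edgeSet {W : Type*} {H : SimpleGraph W} {n : ℕ} {G : SimpleGraph (Fin n)}
    {c : Sym2 (Fin n) → ℕ} (h : WeaklyRainbowSat H G c) : rwsat H n ≤ G.edgeSet.ncard :=
  Nat.sInf_le (.inl ⟨G, c, h, rfl⟩)

theorem rwsat_upper_bound_general {W : Type*} [Finite W] (H : SimpleGraph W)
    (hH : H.edgeSet.Nonempty) (n : ℕ) (hn : fH H + minPosDeg H ≤ n) :
    rwsat H n ≤ minPosDeg H * (n - fH H - minPosDeg H)
      + (fH H + minPosDeg H).choose 2 ∧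
    ∀ c : Sym2 (Fin n) → ℕ, RainbowOn c (upperWitness H n).edgeSet →
      WeaklyRainbowSat H (upperWitness H n) c := by
  obtain ⟨A, B, hA, hB, hAB, hG⟩ := exists_upperWitness_eq_coreGraph H hn
  have hsat (c : Sym2 (Fin n) → ℕ) (hc : (coreGraph A B).edgeSet.InjOn c) :
      WeaklyRainbowSat H (coreGraph A B) c := weaklyRainbowSat_coreGraph hH hA hB hAB hc
  rw [hG]
  refine ⟨?_, fun c hc => hsat c fun e₁ h₁ e₂ h₂ => hc e₁ h₁ e₂ h₂⟩
  obtain ⟨c, hc⟩ := exists_injective_nat (Sym2 (Fin n))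
  calc rwsat H n
    _ ≤ (coreGraph A B).edgeSet.ncard := rwsat_le_ncard_edgeSet (hsat c hc.injOn)
    _ = minPosDeg H * (n - fH H - minPosDeg H) + (fH H + minPosDeg H).choose 2 := by
      rw [ncard_edgeSet_coreGraph hAB, hA, hB, Nat.card_fin, add_comm (minPosDeg H) (fH H),
        Nat.sub_add_eq]

/-- If the non-empty graph `H` has no pendant edges and `n > f(H) + δ'(H)`, then
`rwsat(n, H) ≤ δ'(H)·(n - f(H) - δ'(H)) + C(f(H) + δ'(H), 2)`; moreover, the bound
is witnessed by the graph `upperWitness H n` (all pairs inside `A ∪ B` plus all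
pairs between `A` and `C`, where `|A| = δ'(H)`, `|B| = f(H)`,
`|C| = n - f(H) - δ'(H)`) equipped with any rainbow coloring, which is weakly
`H`-rainbow saturated. -/
theorem rwsat_upper_bound {W : Type*} [Fintype W] (H : SimpleGraph W)
    (hH : H.edgeSet.Nonempty)
    (hpend : ∀ u v, H.Adj u v → (H.neighborSet v).ncard ≠ 1)
    (n : ℕ) (hn : fH H + minPosDeg H < n) :
    rwsat H n ≤ minPosDeg H * (n - fH H - minPosDeg H)
      + (fH H + minPosDeg H).choose 2 ∧
    ∀ c : Sym2 (Fin n) → ℕ, RainbowOn c (upperWitness H n).edgeSet →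
      WeaklyRainbowSat H (upperWitness H n) c :=
  rwsat_upper_bound_general H hH n hn.le
end

section
/- For every integer ℓ ≥ 4, there exists a constant c_ℓ depending only on ℓ such that rwsat(n, C_ℓ) ≤ (3/2)·n + c_ℓ for every positive integer n, where C_ℓ is the cycle on ℓ vertices. -/
open SimpleGraph

/-! A large rainbow clique `K` closes every short rainbow path that joins two of its vertices from
the outside into a rainbow `ℓ`-cycle: each color occurs on at most one edge of `K`, so the colors of
the path are avoided by deleting few vertices of `K`. Take such a `K` of bounded size and attach
triangles at a vertex `a` of `K`, disjoint apart from `a`, in a rainbow coloring; this uses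
`(3/2)n + O(1)` edges. First add the edges `xu` with `x ∈ K`, `u ∉ K`: one of the paths `x, u, a`
and `x, u, v, a`, where `u, v, a` is the triangle at `u`, is rainbow, because if `xu` has the color
of `ua`, it has the color of neither `uv` nor `va`. Then add the edges `uw` outside `K`, closing
`x, u, w, y` for suitable `x, y ∈ K`: its edges are all new, hence have distinct colors. -/

open Finset

variable {V : Type*} {G G' : SimpleGraph V} {c c' : Sym2 V → ℕ}

section Cycle

theorem mem_edgeSet_cycleGraph_iff {n : ℕ} {e : Sym2 (Fin (n + 2))} :
    e ∈ (cycleGraph (n + 2)).edgeSet ↔ ∃ i, e = s(i, i + 1) := by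
  induction e with | h a b
  rw [mem_edgeSet, cycleGraph_adj]
  constructor
  · rintro (h | h)
    · exact ⟨b, by rw [← h, add_sub_cancel, Sym2.eq_swap]⟩
    · exact ⟨a, by rw [← h, add_sub_cancel]⟩
  · rintro ⟨i, h⟩
    rcases Sym2.eq_iff.mp h with ⟨rfl, rfl⟩ | ⟨rfl, rfl⟩ <;> simp

theorem isRainbowCopyThrough_cycleGraph {v : V} {p : G.Walk v v} (hp : p.IsCycle)
    (hpc : (p.edges.map c).Nodup) {e : Sym2 V} (he : e ∈ p.edges) :
    IsRainbowCopyThrough (cycleGraph p.length) G c e := by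
  obtain ⟨n, hn⟩ : ∃ n, p.length = n + 2 := ⟨p.length - 2, by have := hp.three_le_length; lia⟩
  rw [hn]
  have hget (i : Fin (n + 2)) : p.getVert (i + 1 : Fin (n + 2)) = p.getVert (i + 1 : ℕ) := by
    rcases eq_or_ne i (Fin.last _) with rfl | hi
    · simp [← hn]
    · rw [Fin.val_add_one_of_lt (Fin.lt_last_iff_ne_last.mpr hi)]
  have hlen : p.edges.length = n + 2 := by simp [hn]
  have hedge (i : Fin (n + 2)) :
      s(p.getVert i, p.getVert (i + 1 : Fin (n + 2))) = p.edges[(i : ℕ)] := by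
    rw [hget, Walk.getElem_edges]
  have hmap {a b i : Fin (n + 2)} (h : s(a, b) = s(i, i + 1)) :
      s(p.getVert a, p.getVert b) = p.edges[(i : ℕ)] := by
    rw [← hedge]
    simpa using congrArg (Sym2.map fun j : Fin (n + 2) ↦ p.getVert j) h
  refine ⟨fun i ↦ p.getVert i, fun i j hij ↦ ?_, fun a b hab ↦ ?_,
    fun a b a' b' hab hab' h ↦ ?_, ?_⟩
  · exact Fin.ext (hp.getVert_injOn' (show (i : ℕ) ≤ _ by lia) (show (j : ℕ) ≤ _ by lia) hij)
  · obtain ⟨i, hi⟩ := mem_edgeSet_cycleGraph_iff.mp ((mem_edgeSet _).mpr hab)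
    rw [← mem_edgeSet, hmap hi]
    exact p.edges_subset_edgeSet (List.getElem_mem _)
  · obtain ⟨i, hi⟩ := mem_edgeSet_cycleGraph_iff.mp ((mem_edgeSet _).mpr hab)
    obtain ⟨j, hj⟩ := mem_edgeSet_cycleGraph_iff.mp ((mem_edgeSet _).mpr hab')
    rw [hmap hi, hmap hj] at h
    have hij : (i : ℕ) = j := (hpc.getElem_inj_iff (hi := by simp [hn]) (hj := by simp [hn])).mp
      (by simpa using h)
    rw [hi, hj, Fin.ext hij]
  · obtain ⟨i, hi, rfl⟩ := List.mem_iff_getElem.mp he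
    exact ⟨_, _, mem_edgeSet_cycleGraph_iff.mpr ⟨⟨i, hlen ▸ hi⟩, rfl⟩, (hedge ⟨i, hlen ▸ hi⟩).symm⟩

end Cycle

section RainbowClique

theorem exists_isPath_of_isClique {k : ℕ} (hk : k ≠ 0) {K : Finset V} (hK : G.IsClique K)
    (hkK : k < #K) {x y : V} (hx : x ∈ K) (hy : y ∈ K) (hxy : x ≠ y) :
    ∃ p : G.Walk x y, p.IsPath ∧ p.length = k ∧ ∀ v ∈ p.support, v ∈ K := by
  classical
  induction k, Nat.one_le_iff_ne_zero.mpr hk using Nat.le_induction generalizing K x with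
  | base => exact ⟨(hK hx hy hxy).toWalk, .of_adj _, rfl, by simp [hx, hy]⟩
  | succ k hk1 ih =>
    obtain ⟨z, hz, hzxy⟩ : ∃ z ∈ K, z ∉ ({x, y} : Finset V) :=
      exists_mem_notMem_of_card_lt_card (card_le_two.trans_lt (by lia))
    simp only [mem_insert, mem_singleton, not_or] at hzxy
    obtain ⟨p, hp, hpk, hpK⟩ := ih (by lia) (hK.subset (K.erase_subset x))
      (by rw [card_erase_of_mem hx]; lia) (mem_erase.mpr ⟨hzxy.1, hz⟩)
      (mem_erase.mpr ⟨hxy.symm, hy⟩) hzxy.2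
    refine ⟨.cons (hK hx hz (Ne.symm hzxy.1)) p, hp.cons fun h ↦ ?_, by simp [hpk], fun v hv ↦ ?_⟩
    · exact notMem_erase x K (hpK x h)
    · rcases List.mem_cons.mp hv with rfl | hv
      · exact hx
      · exact mem_of_mem_erase (hpK v hv)

theorem RainbowOn.nodup_map {E : Set (Sym2 V)} (hc : RainbowOn c E) {l : List (Sym2 V)}
    (hl : l.Nodup) (hlE : ∀ e ∈ l, e ∈ E) : (l.map c).Nodup :=
  hl.map_on fun e he e' he' ↦ hc e (hlE e he) e' (hlE e' he')

/-- `K` is a clique of `G` whose edges have pairwise distinct colors. -/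
structure IsRainbowClique (G : SimpleGraph V) (c : Sym2 V → ℕ) (K : Finset V) : Prop where
  isClique : G.IsClique K
  rainbowOn : RainbowOn c (G.edgeSet ∩ K.sym2)

namespace IsRainbowClique

variable {K : Finset V}

theorem of_rainbowOn_edgeSet (hK : G.IsClique K) (hle : G ≤ G')
    (hc : RainbowOn c G.edgeSet) : IsRainbowClique G' c K where
  isClique := hK.mono hle
  rainbowOn := by
    have hmem {e : Sym2 V} (he : e ∈ G'.edgeSet ∩ K.sym2) : e ∈ G.edgeSet := by
      induction e with | h x y
      obtain ⟨hx, hy⟩ := mk_mem_sym2_iff.mp he.2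
      exact hK hx hy (G'.ne_of_adj he.1)
    exact fun e he e' he' ↦ hc e (hmem he) e' (hmem he')

variable (hK : IsRainbowClique G c K)
include hK

theorem subset {K' : Finset V} (h : K' ⊆ K) : IsRainbowClique G c K' where
  isClique := hK.isClique.subset h
  rainbowOn := fun e he e' he' ↦
    hK.rainbowOn e ⟨he.1, sym2_mono h he.2⟩ e' ⟨he'.1, sym2_mono h he'.2⟩

theorem mk_eq_mk_of_color_eq {x y x' y' : V} (hx : x ∈ K) (hy : y ∈ K) (hxy : x ≠ y)
    (hx' : x' ∈ K) (hy' : y' ∈ K) (hxy' : x' ≠ y') (h : c s(x, y) = c s(x', y')) :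
    s(x, y) = s(x', y') :=
  hK.rainbowOn _ ⟨hK.isClique hx hy hxy, mk_mem_sym2_iff.mpr ⟨hx, hy⟩⟩
    _ ⟨hK.isClique hx' hy' hxy', mk_mem_sym2_iff.mpr ⟨hx', hy'⟩⟩ h

theorem exists_subset_forall_color_mem_imp_eq {x y : V} (hx : x ∈ K) (hy : y ∈ K) (F : Finset ℕ) :
    ∃ K' ⊆ K, x ∈ K' ∧ y ∈ K' ∧ #K ≤ #K' + #F ∧
      ∀ e ∈ G.edgeSet, e ∈ K'.sym2 → c e ∈ F → e = s(x, y) := by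
  classical
  set B : Finset (Sym2 V) := {e ∈ K.sym2 | e ∈ G.edgeSet ∧ c e ∈ F ∧ e ≠ s(x, y)}
  have hB {e : Sym2 V} : e ∈ B ↔ e ∈ K.sym2 ∧ e ∈ G.edgeSet ∧ c e ∈ F ∧ e ≠ s(x, y) := mem_filter
  have hBF : #B ≤ #F := card_le_card_of_injOn c (fun e he ↦ (hB.mp he).2.2.1) fun e he e' he' ↦
    hK.rainbowOn e ⟨(hB.mp he).2.1, (hB.mp he).1⟩ e' ⟨(hB.mp he').2.1, (hB.mp he').1⟩
  have hend (e : Sym2 V) (he : e ∈ B) : ∃ v ∈ e, v ≠ x ∧ v ≠ y := by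
    obtain ⟨-, heG, -, hne⟩ := hB.mp he
    induction e with | h a b
    have hab : a ≠ b := G.ne_of_adj heG
    by_contra! h
    have := h a (Sym2.mem_mk_left a b)
    have := h b (Sym2.mem_mk_right a b)
    grind
  have : Nonempty V := ⟨x⟩
  choose! v hve hvxy using hend
  refine ⟨K \ B.image v, sdiff_subset, ?_, ?_, ?_, fun e heG heK heF ↦ ?_⟩
  · grind
  · grind
  · have := le_card_sdiff (B.image v) K
    have : #(B.image v) ≤ #B := card_image_le
    lia
  · by_contra hne
    have heB : e ∈ B := hB.mpr ⟨sym2_mono sdiff_subset heK, heG, heF, hne⟩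
    exact (mem_sdiff.mp (mem_sym2_iff.mp heK _ (hve e heB))).2 (mem_image_of_mem v heB)

theorem exists_isPath_nodup_color {x y : V} (hx : x ∈ K) (hy : y ∈ K) (hxy : x ≠ y) (F : Finset ℕ)
    {k : ℕ} (hk : k ≠ 0) (hkK : k + #F < #K) (hF : k = 1 → c s(x, y) ∉ F) :
    ∃ p : G.Walk x y, p.IsPath ∧ p.length = k ∧ (∀ v ∈ p.support, v ∈ K) ∧
      (p.edges.map c).Nodup ∧ ∀ e ∈ p.edges, c e ∉ F := by
  obtain ⟨K', hK', hxK', hyK', hcard, hcol⟩ := hK.exists_subset_forall_color_mem_imp_eq hx hy F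
  obtain ⟨p, hp, rfl, hpK'⟩ := exists_isPath_of_isClique hk (hK.isClique.subset hK') (by lia)
    hxK' hyK' hxy
  have hsym2 (e) (he : e ∈ p.edges) : e ∈ K'.sym2 :=
    mem_sym2_iff.mpr fun v hv ↦ hpK' v (p.mem_support_of_mem_edges he hv)
  refine ⟨p, hp, rfl, fun v hv ↦ hK' (hpK' v hv), ?_, fun e he heF ↦ ?_⟩
  · exact (hK.subset hK').rainbowOn.nodup_map hp.isTrail.edges_nodup
      fun e he ↦ ⟨p.edges_subset_edgeSet he, hsym2 e he⟩
  · obtain rfl := hcol e (p.edges_subset_edgeSet he) (hsym2 e he) heF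
    exact hF (hp.length_eq_one_of_mem_edges he) heF

theorem isRainbowCopyThrough_of_isPath {x y : V} {q : G.Walk y x} (hq : q.IsPath)
    (hx : x ∈ K) (hy : y ∈ K) (hqK : ∀ v ∈ q.support, v ∈ K → v = x ∨ v = y)
    (hqc : (q.edges.map c).Nodup) {ℓ : ℕ} (hqℓ : q.length < ℓ) (hℓ : ℓ < #K) (hq1 : 1 < q.length)
    (hxy : ℓ = q.length + 1 → c s(x, y) ∉ q.edges.map c) {e : Sym2 V} (he : e ∈ q.edges) :
    IsRainbowCopyThrough (cycleGraph ℓ) G c e := by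
  classical
  have hne : x ≠ y := by
    rintro rfl
    simp [Walk.length_eq_zero_iff.mpr (Walk.isPath_iff_nil.mp hq)] at hq1
  have hF : #(q.edges.map c).toFinset ≤ q.length :=
    (List.toFinset_card_le _).trans_eq (by simp)
  obtain ⟨p, hp, hpℓ, hpK, hpc, hpF⟩ := hK.exists_isPath_nodup_color hx hy hne
    (q.edges.map c).toFinset (k := ℓ - q.length) (by lia) (by lia)
    (fun h ↦ by simpa using hxy (by lia))
  have htail {v w : V} {p : G.Walk v w} (hp : p.IsPath) : v ∉ p.support.tail :=
    (List.nodup_cons.mp (p.cons_tail_support ▸ hp.support_nodup)).1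
  have hdisj : q.support.tail.Disjoint p.support.tail := fun v hvq hvp ↦ by
    rcases hqK v (List.mem_of_mem_tail hvq) (hpK v (List.mem_of_mem_tail hvp)) with rfl | rfl
    · exact htail hp hvp
    · exact htail hq hvq
  have hlen : (q.append p).length = ℓ := by rw [Walk.length_append]; lia
  rw [← hlen]
  refine isRainbowCopyThrough_cycleGraph (hq.isCycle_append hp hdisj (.inl hq1)) ?_
    (by simp [he])
  rw [Walk.edges_append, List.map_append, List.nodup_append']
  refine ⟨hqc, hpc, fun t htq htp ↦ ?_⟩
  obtain ⟨e', he', rfl⟩ := List.mem_map.mp htp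
  exact hpF e' he' (List.mem_toFinset.mpr htq)

theorem exists_color_ne (hcard : 4 ≤ #K) (t : ℕ) (f g : V → ℕ) :
    ∃ x ∈ K, ∃ y ∈ K, x ≠ y ∧ c s(x, y) ≠ t ∧ c s(x, y) ≠ f x ∧ c s(x, y) ≠ g y := by
  classical
  -- Of the `#K * (#K - 1)` ordered pairs, `t` excludes at most two (an edge of `K` in both
  -- orders), and each of `f` and `g` excludes at most one pair per vertex.
  by_contra! hbad
  set T : Finset (V × V) := {p ∈ K.offDiag | c s(p.1, p.2) = t}
  set A : Finset (V × V) := {p ∈ K.offDiag | c s(p.1, p.2) = f p.1}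
  set B : Finset (V × V) := {p ∈ K.offDiag | c s(p.1, p.2) = g p.2}
  have hTcard : #T ≤ 2 := by
    obtain hT0 | ⟨p, hp⟩ := T.eq_empty_or_nonempty
    · simp [hT0]
    · refine (card_le_card fun q hq ↦ ?_).trans (card_le_two (a := p) (b := p.swap))
      grind [hK.mk_eq_mk_of_color_eq (x := q.1) (y := q.2) (x' := p.1) (y' := p.2)]
  have hAcard : #A ≤ #K := card_le_card_of_injOn Prod.fst
      (fun p hp ↦ (mem_offDiag.mp (mem_filter.mp hp).1).1) fun p hp q hq h ↦ by
    grind [hK.mk_eq_mk_of_color_eq (x := q.1) (y := q.2) (x' := p.1) (y' := p.2)]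
  have hBcard : #B ≤ #K := card_le_card_of_injOn Prod.snd
      (fun p hp ↦ (mem_offDiag.mp (mem_filter.mp hp).1).2.1) fun p hp q hq h ↦ by
    grind [hK.mk_eq_mk_of_color_eq (x := q.1) (y := q.2) (x' := p.1) (y' := p.2)]
  have hsub : K.offDiag ⊆ T ∪ (A ∪ B) := by grind
  have := card_le_card hsub
  have := card_union_le T (A ∪ B)
  have := card_union_le A B
  rw [offDiag_card] at *
  have : 4 * #K ≤ #K * #K := Nat.mul_le_mul_right _ hcard
  lia

end IsRainbowClique

end RainbowClique

section Extension

theorem foldl_update_of_notMem {α β : Type*} [DecidableEq α] {T : List (α × β)} {a : α}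
    (ha : a ∉ T.map Prod.fst) (f : α → β) :
    T.foldl (fun f p ↦ Function.update f p.1 p.2) f a = f a := by
  induction T generalizing f with
  | nil => rfl
  | cons p T ih =>
    rw [List.map_cons, List.mem_cons, not_or] at ha
    rw [List.foldl_cons, ih ha.2, Function.update_of_ne ha.1]

theorem foldl_update_of_mem {α β : Type*} [DecidableEq α] {T : List (α × β)}
    (hT : (T.map Prod.fst).Nodup) {p : α × β} (hp : p ∈ T) (f : α → β) :
    T.foldl (fun f p ↦ Function.update f p.1 p.2) f p.1 = p.2 := by
  induction T generalizing f with
  | nil => simp at hp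
  | cons q T ih =>
    rw [List.map_cons, List.nodup_cons] at hT
    rw [List.foldl_cons]
    obtain rfl | hp := List.mem_cons.mp hp
    · rw [foldl_update_of_notMem hT.1, Function.update_self]
    · exact ih hT.2 hp _

/-- The edge-colored graph `(G', c')` arises from `(G, c)` by adding edges in pairwise distinct
colors. A new edge may repeat a color of `G`. -/
structure IsRainbowExtension (G : SimpleGraph V) (c : Sym2 V → ℕ) (G' : SimpleGraph V)
    (c' : Sym2 V → ℕ) : Prop where
  le : G ≤ G'
  eqOn : Set.EqOn c' c G.edgeSet
  rainbowOn : RainbowOn c' (G'.edgeSet \ G.edgeSet)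

theorem isRainbowExtension_foldl_update [DecidableEq V] {T : List (Sym2 V × ℕ)}
    (hT : ∀ e ∈ T.map Prod.fst, e ∉ G.edgeSet) (hfst : (T.map Prod.fst).Nodup)
    (hsnd : (T.map Prod.snd).Nodup) :
    IsRainbowExtension G c (G ⊔ fromEdgeSet {e | e ∈ T.map Prod.fst})
      (T.foldl (fun c p ↦ Function.update c p.1 p.2) c) where
  le := le_sup_left
  eqOn := fun e he ↦ foldl_update_of_notMem (fun heT ↦ hT e heT he) c
  rainbowOn := by
    have hmem {e : Sym2 V}
        (he : e ∈ (G ⊔ fromEdgeSet {e | e ∈ T.map Prod.fst}).edgeSet \ G.edgeSet) :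
        ∃ p ∈ T, p.1 = e := by
      rw [edgeSet_sup, edgeSet_fromEdgeSet] at he
      exact List.mem_map.mp (he.1.resolve_left he.2).1
    intro e he e' he' h
    obtain ⟨p, hp, rfl⟩ := hmem he
    obtain ⟨q, hq, rfl⟩ := hmem he'
    rw [foldl_update_of_mem hfst hp, foldl_update_of_mem hfst hq] at h
    rw [List.inj_on_of_nodup_map hsnd hp hq h]

theorem IsRainbowExtension.rainbowOn_edgeSet (h : IsRainbowExtension G c G' c')
    (hc : RainbowOn c G.edgeSet) : RainbowOn c' G.edgeSet := fun e he e' he' hee' ↦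
  hc e he e' he' (by rwa [h.eqOn he, h.eqOn he'] at hee')

theorem exists_list_pairwise_le_of_finite {α β : Type*} [LinearOrder α] {S : Set β}
    (hS : S.Finite) (r : β → α) :
    ∃ L : List β, L.Nodup ∧ (∀ b, b ∈ L ↔ b ∈ S) ∧ L.Pairwise (r · ≤ r ·) := by
  refine ⟨hS.toFinset.toList.insertionSort (r · ≤ r ·), ?_, ?_, ?_⟩
  · exact (List.perm_insertionSort _ _).nodup_iff.mpr (nodup_toList _)
  · simp [List.mem_insertionSort]
  · exact List.pairwise_insertionSort _ _

theorem weaklyRainbowSat_of_forall_isRainbowExtension {W : Type*} [Finite V] [DecidableEq V]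
    {H : SimpleGraph W} {α : Type*} [LinearOrder α] (r : Sym2 V → α)
    (hr : ∀ e ∈ Gᶜ.edgeSet, ∀ (G' : SimpleGraph V) (c' : Sym2 V → ℕ),
      IsRainbowExtension G c G' c' → e ∈ G'.edgeSet →
      (∀ f ∈ Gᶜ.edgeSet, r f < r e → f ∈ G'.edgeSet) → IsRainbowCopyThrough H G' c' e) :
    WeaklyRainbowSat H G c := by
  obtain ⟨L, hL, hmem, hsort⟩ := exists_list_pairwise_le_of_finite Gᶜ.edgeSet.toFinite r
  refine ⟨L, hL, hmem, fun cs hlen hcs i ↦ ?_⟩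
  have hfst : ((L.zip cs).take (i + 1)).map Prod.fst = L.take (i + 1) := by
    rw [List.map_take, List.map_fst_zip hlen.ge]
  have hsnd : ((L.zip cs).take (i + 1)).map Prod.snd = cs.take (i + 1) := by
    rw [List.map_take, List.map_snd_zip hlen.le]
  have hmem' {e : Sym2 V} (he : e ∈ L.take (i + 1)) :
      e ∈ (G ⊔ fromEdgeSet {e | e ∈ L.take (i + 1)}).edgeSet := by
    rw [edgeSet_sup, edgeSet_fromEdgeSet]
    exact .inr ⟨he, not_isDiag_of_mem_edgeSet _ ((hmem e).mp (List.mem_of_mem_take he))⟩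
  have hext := isRainbowExtension_foldl_update (G := G) (c := c) (T := (L.zip cs).take (i + 1))
    (fun e he heG ↦ ?_) ?_ ?_
  · rw [hfst] at hext
    refine hr _ ((hmem _).mp (List.get_mem L i)) _ _ hext (hmem' ?_) fun f hf hlt ↦ hmem' ?_
    · exact List.mem_take_iff_getElem.mpr ⟨i, by lia, rfl⟩
    · obtain ⟨j, hj, rfl⟩ := List.mem_iff_getElem.mp ((hmem f).mpr hf)
      refine List.mem_take_iff_getElem.mpr ⟨j, ?_, rfl⟩
      by_contra! hij
      exact hlt.not_ge (List.pairwise_iff_getElem.mp hsort i j _ _ (by lia))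
  · rw [hfst] at he
    have := (hmem e).mp (List.mem_of_mem_take he)
    exact Set.disjoint_left.mp (disjoint_edgeSet.mpr disjoint_compl_right) heG this
  · exact hfst ▸ hL.sublist (List.take_sublist _ _)
  · exact hsnd ▸ hcs.sublist (List.take_sublist _ _)

end Extension

section Saturation

variable {K : Finset V}

namespace IsRainbowClique

variable (hK : IsRainbowClique G c K) {ℓ : ℕ} (hℓ : 4 ≤ ℓ) (hℓK : ℓ < #K)
include hK hℓ hℓK

theorem isRainbowCopyThrough_of_nodup_color {x y u w : V} (hx : x ∈ K) (hy : y ∈ K) (hxy : x ≠ y)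
    (hu : u ∉ K) (hw : w ∉ K) (hxu : G.Adj x u) (huw : G.Adj u w) (hwy : G.Adj w y)
    (hcol : ([s(x, y), s(x, u), s(u, w), s(w, y)].map c).Nodup) {e : Sym2 V}
    (he : e ∈ [s(x, u), s(u, w), s(w, y)]) :
    IsRainbowCopyThrough (cycleGraph ℓ) G c e := by
  rw [List.map_cons, List.nodup_cons] at hcol
  have hpath : (Walk.cons hxu (.cons huw (.cons hwy .nil))).IsPath := by
    have := huw.ne
    simp only [Walk.isPath_def, Walk.support_cons, Walk.support_nil]
    grind
  exact hK.isRainbowCopyThrough_of_isPath hpath hy hx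
    (by simp only [Walk.support_cons, Walk.support_nil]; grind) hcol.2 (by simpa) hℓK
    (by simp) (fun _ ↦ Sym2.eq_swap ▸ hcol.1) he

theorem isRainbowCopyThrough_of_forall_mem {E : Set (Sym2 V)} (hEG : E ⊆ G.edgeSet)
    (hcE : RainbowOn c E) {S : Finset V} (hSK : S ⊆ K) (hS : 4 ≤ #S) {u w : V} (hu : u ∉ K)
    (hw : w ∉ K) (huw : s(u, w) ∈ E) (huS : ∀ x ∈ S, s(x, u) ∈ E) (hwS : ∀ y ∈ S, s(w, y) ∈ E) :
    IsRainbowCopyThrough (cycleGraph ℓ) G c s(u, w) := by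
  obtain ⟨x, hx, y, hy, hxy, htu, hxu, hyw⟩ := (hK.subset hSK).exists_color_ne hS (c s(u, w))
    (fun x ↦ c s(x, u)) (fun y ↦ c s(w, y))
  have hne : u ≠ w := G.ne_of_adj (hEG huw)
  have hear : ([s(x, u), s(u, w), s(w, y)].map c).Nodup :=
    hcE.nodup_map (by simp only [List.nodup_cons, List.mem_cons, Sym2.eq_iff]; grind)
      (by simp [huw, huS x hx, hwS y hy])
  refine hK.isRainbowCopyThrough_of_nodup_color hℓ hℓK (hSK hx) (hSK hy) hxy hu hw
    (hEG (huS x hx)) (hEG huw) (hEG (hwS y hy)) (List.nodup_cons.mpr ⟨?_, hear⟩) (by simp)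
  simp [htu, hxu, hyw]

end IsRainbowClique

/-- `K` is a clique of `G`, and the vertices outside `K` are attached to `K` only at `a ∈ K`, each
lying in a triangle through `a` whose third vertex is outside `K` as well. -/
structure IsCliqueWithTriangles (G : SimpleGraph V) (K : Finset V) (a : V) : Prop where
  isClique : G.IsClique K
  mem : a ∈ K
  adj_iff : ∀ u ∉ K, ∀ x ∈ K, G.Adj u x ↔ x = a
  exists_adj : ∀ u ∉ K, ∃ v ∉ K, G.Adj u v

namespace IsCliqueWithTriangles

variable {a : V} (h : IsCliqueWithTriangles G K a)
include h

theorem isRainbowCopyThrough_of_adj (hle : G ≤ G') (hc : RainbowOn c G.edgeSet) {ℓ : ℕ}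
    (hℓ : 4 ≤ ℓ) (hℓK : ℓ < #K) {x u : V} (hx : x ∈ K) (hu : u ∉ K) (hxa : x ≠ a)
    (hxu : G'.Adj x u) : IsRainbowCopyThrough (cycleGraph ℓ) G' c s(x, u) := by
  have hK : IsRainbowClique G' c K := .of_rainbowOn_edgeSet h.isClique hle hc
  obtain ⟨v, hv, huv⟩ := h.exists_adj u hu
  have ha := h.mem
  have hua : G.Adj u a := (h.adj_iff u hu a ha).mpr rfl
  have hva : G.Adj v a := (h.adj_iff v hv a ha).mpr rfl
  have hne := huv.ne
  by_cases hcol : c s(x, u) = c s(u, a)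
  · refine hK.isRainbowCopyThrough_of_nodup_color hℓ hℓK hx ha hxa hu hv hxu (hle huv) (hle hva)
      ?_ (by simp)
    have := hc.nodup_map (l := [s(x, a), s(u, a), s(u, v), s(v, a)])
      (by simp only [List.nodup_cons, List.mem_cons, Sym2.eq_iff]; grind)
      (by simp [hua, hva, huv, h.isClique hx ha hxa])
    simpa [hcol] using this
  · have hpath : (Walk.cons hxu (.cons (hle hua) .nil)).IsPath := by
      simp only [Walk.isPath_def, Walk.support_cons, Walk.support_nil]
      grind
    exact hK.isRainbowCopyThrough_of_isPath hpath ha hx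
      (by simp only [Walk.support_cons, Walk.support_nil]; grind) (by simpa using hcol)
      (by simp only [Walk.length_cons, Walk.length_nil]; lia) hℓK (by simp)
      (by simp only [Walk.length_cons, Walk.length_nil]; lia) (by simp)

theorem weaklyRainbowSat [Finite V] [DecidableEq V] (hc : RainbowOn c G.edgeSet) {ℓ : ℕ}
    (hℓ : 4 ≤ ℓ) (hℓK : ℓ < #K) : WeaklyRainbowSat (cycleGraph ℓ) G c := by
  refine weaklyRainbowSat_of_forall_isRainbowExtension (fun e ↦ if ∃ x ∈ K, x ∈ e then 0 else 1)
    fun e he G' c' hext heG' hbefore ↦ ?_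
  have hcG := hext.rainbowOn_edgeSet hc
  by_cases heK : ∃ x ∈ K, x ∈ e
  · obtain ⟨x, hx, u, rfl⟩ := heK
    have hxu : ¬G.Adj x u := ((compl_adj ..).mp he).2
    have hu : u ∉ K := fun hu ↦ hxu (h.isClique hx hu (G'.ne_of_adj heG'))
    have hxa : x ≠ a := fun hxa ↦ hxu ((h.adj_iff u hu x hx).mpr hxa).symm
    exact h.isRainbowCopyThrough_of_adj hext.le hcG hℓ hℓK hx hu hxa heG'
  · induction e with | h u w
    have hu : u ∉ K := fun hu ↦ heK ⟨u, hu, Sym2.mem_mk_left u w⟩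
    have hw : w ∉ K := fun hw ↦ heK ⟨w, hw, Sym2.mem_mk_right u w⟩
    have hnew {x v : V} (hx : x ∈ K.erase a) (hv : v ∉ K) :
        s(x, v) ∈ G'.edgeSet \ G.edgeSet := by
      obtain ⟨hxa, hxK⟩ := mem_erase.mp hx
      have hxv : ¬G.Adj x v := fun hxv ↦ hxa ((h.adj_iff v hv x hxK).mp hxv.symm)
      refine ⟨hbefore _ ((compl_adj ..).mpr ⟨by grind, hxv⟩) ?_, hxv⟩
      rw [if_pos ⟨x, hxK, Sym2.mem_mk_left x v⟩, if_neg heK]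
      exact Nat.zero_lt_one
    have hK : IsRainbowClique G' c' K := .of_rainbowOn_edgeSet h.isClique hext.le hcG
    exact hK.isRainbowCopyThrough_of_forall_mem hℓ hℓK Set.sdiff_subset hext.rainbowOn
      (erase_subset a K) (by rw [card_erase_of_mem h.mem]; lia) hu hw
      ⟨heG', ((compl_adj ..).mp he).2⟩ (fun x hx ↦ hnew hx hu)
      (fun y hy ↦ Sym2.eq_swap ▸ hnew hy hw)

end IsCliqueWithTriangles

end Saturation

section Construction

/-- The clique on `0, …, m - 1` together with `t` triangles through the vertex `0`, namely
`0, m + 2p, m + 2p + 1` for `p < t`. By truncated subtraction, `(i + 2 - m) / 2` is `0` on the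
clique and `p + 1` on the vertices `m + 2p` and `m + 2p + 1`. -/
def cliqueWithTriangles (m t : ℕ) : SimpleGraph (Fin (m + 2 * t)) :=
  .fromRel fun i j ↦ i.val = 0 ∨ (i.val + 2 - m) / 2 = (j.val + 2 - m) / 2

variable {m : ℕ} (t : ℕ)

theorem isCliqueWithTriangles_cliqueWithTriangles (hm : 0 < m) :
    IsCliqueWithTriangles (cliqueWithTriangles m t) {i | i.val < m} ⟨0, by lia⟩ where
  isClique i hi j hj hij := by
    simp only [coe_filter_univ, Set.mem_ofPred_eq] at hi hj
    simp only [cliqueWithTriangles, fromRel_adj]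
    lia
  mem := by simpa using hm
  adj_iff u hu x hx := by
    simp only [mem_filter_univ] at hu hx
    simp only [cliqueWithTriangles, fromRel_adj, ne_eq, Fin.ext_iff]
    lia
  exists_adj u hu := by
    simp only [mem_filter_univ] at hu
    refine ⟨⟨m + 2 * ((u - m) / 2) + (1 - (u - m) % 2), by lia⟩,
      by simp only [mem_filter_univ]; lia, ?_⟩
    simp only [cliqueWithTriangles, fromRel_adj, ne_eq, Fin.ext_iff]
    lia

theorem ncard_edgeSet_cliqueWithTriangles_le (hm : 0 < m) :
    (cliqueWithTriangles m t).edgeSet.ncard ≤ (m + 1).choose 2 + 3 * t := by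
  let K : Finset (Fin (m + 2 * t)) := {i | i.val < m}
  let a : Fin (m + 2 * t) := ⟨0, by lia⟩
  let u (p : Fin t) : Fin (m + 2 * t) := ⟨m + 2 * p, by lia⟩
  let v (p : Fin t) : Fin (m + 2 * t) := ⟨m + 2 * p + 1, by lia⟩
  let T (p : Fin t) : Finset (Sym2 (Fin (m + 2 * t))) := {s(a, u p), s(a, v p), s(u p, v p)}
  have hlt (i j : Fin (m + 2 * t)) (hij : i < j) (h : (cliqueWithTriangles m t).Adj i j) :
      s(i, j) ∈ K.sym2 ∪ univ.biUnion T := by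
    rw [mem_union]
    by_cases hj : j.val < m
    · exact .inl (mk_mem_sym2_iff.mpr (by simp only [K, mem_filter_univ]; lia))
    · refine .inr (mem_biUnion.mpr ⟨⟨(j - m) / 2, by lia⟩, mem_univ _, ?_⟩)
      simp only [cliqueWithTriangles, fromRel_adj] at h
      simp only [T, a, u, v, mem_insert, mem_singleton, Sym2.eq_iff, Fin.ext_iff]
      lia
  have hsub : (cliqueWithTriangles m t).edgeSet ⊆ ↑(K.sym2 ∪ univ.biUnion T) := fun e he ↦ by
    induction e with | h i j
    have hadj : (cliqueWithTriangles m t).Adj i j := he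
    obtain hij | hij := hadj.ne.lt_or_gt
    · exact hlt i j hij hadj
    · exact Sym2.eq_swap ▸ hlt j i hij hadj.symm
  have hK : #K = m := by simp [K, Fin.card_filter_val_lt]
  have hT : #(univ.biUnion T) ≤ t * 3 := by
    simpa using card_biUnion_le_card_mul univ T 3 fun p _ ↦ card_le_three
  calc (cliqueWithTriangles m t).edgeSet.ncard ≤ #(K.sym2 ∪ univ.biUnion T) := by
        rw [← Set.ncard_coe_finset]; exact Set.ncard_le_ncard hsub
    _ ≤ #K.sym2 + #(univ.biUnion T) := card_union_le _ _
    _ ≤ (m + 1).choose 2 + 3 * t := by rw [card_sym2, hK]; lia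

theorem rwsat_cycleGraph_le {ℓ : ℕ} (hℓ : 4 ≤ ℓ) (hm : ℓ < m) :
    rwsat (cycleGraph ℓ) (m + 2 * t) ≤ (m + 1).choose 2 + 3 * t := by
  obtain ⟨c, hc⟩ := exists_injective_nat (Sym2 (Fin (m + 2 * t)))
  have hm₀ : 0 < m := by lia
  have hsat : WeaklyRainbowSat (cycleGraph ℓ) (cliqueWithTriangles m t) c :=
    (isCliqueWithTriangles_cliqueWithTriangles t hm₀).weaklyRainbowSat (fun e _ e' _ h ↦ hc h) hℓ
      (by rw [Fin.card_filter_val_lt]; lia)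
  exact (Nat.sInf_le (.inl ⟨_, c, hsat, rfl⟩)).trans (ncard_edgeSet_cliqueWithTriangles_le t hm₀)

end Construction

/-- For every `ℓ ≥ 4` there is a constant `c_ℓ` such that
`rwsat(n, C_ℓ) ≤ (3/2)·n + c_ℓ` for every positive `n`. -/
theorem rwsat_cycle_le_three_halves (ℓ : ℕ) (hℓ : 4 ≤ ℓ) :
    ∃ cℓ : ℝ, ∀ n : ℕ, 0 < n →
      (rwsat (SimpleGraph.cycleGraph ℓ) n : ℝ) ≤ 3 / 2 * n + cℓ := by
  refine ⟨(ℓ + 3).choose 2, fun n _ ↦ ?_⟩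
  obtain hn | hn := le_or_gt n ℓ
  · have h : rwsat (cycleGraph ℓ) n ≤ (ℓ + 3).choose 2 :=
      (Nat.sInf_le (.inr rfl)).trans (Nat.choose_le_choose 2 (by lia))
    have h' : (rwsat (cycleGraph ℓ) n : ℝ) ≤ (ℓ + 3).choose 2 := mod_cast h
    have : (0 : ℝ) ≤ n := n.cast_nonneg
    linarith
  · obtain ⟨m, t, hℓm, hmℓ, rfl⟩ : ∃ m t, ℓ < m ∧ m ≤ ℓ + 2 ∧ n = m + 2 * t :=
      ⟨n - 2 * ((n - (ℓ + 1)) / 2), (n - (ℓ + 1)) / 2, by lia, by lia, by lia⟩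
    have h : rwsat (cycleGraph ℓ) (m + 2 * t) ≤ (ℓ + 3).choose 2 + 3 * t :=
      (rwsat_cycleGraph_le t hℓ hℓm).trans
        (Nat.add_le_add_right (Nat.choose_le_choose 2 (by lia)) _)
    have h' : (rwsat (cycleGraph ℓ) (m + 2 * t) : ℝ) ≤ (ℓ + 3).choose 2 + 3 * t := mod_cast h
    have : (0 : ℝ) ≤ m := m.cast_nonneg
    push_cast
    linarith
end
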